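/- arXiv:1603.06069 — 4 statements merged into one kernel-verified Lean document; each statement's English description precedes it below -/
import Mathlib

section
/- Let N = n₁ + ⋯ + n_r. Suppose P is a monic real polynomial of degree N satisfying the multiple orthogonality conditions ∫ P(x) x^k dμ_j(x) = 0 for all 0 ≤ k ≤ n_j − 1 and all 1 ≤ j ≤ r, and suppose P has N distinct real zeros x₁ < x₂ < ⋯ < x_N. Define the quadrature weights λ_k^{(j)} = ∫ ℓ_k(x) dμ_j(x), where ℓ_k is the k-th fundamental Lagrange polynomial for the nodes x₁,…,x_N. Then for every j ∈ {1,…,r} and every real polynomial p of degree ≤ N + n_j − 1, one has ∑_{k=1}^{N} λ_k^{(j)} p(x_k) = ∫ p(x) dμ_j(x). -/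
open MeasureTheory

/-!
Divide `p` by `P`: `p = R + P * Q`. The remainder `R` has degree below the number of nodes, so it is
its own Lagrange interpolant and interpolatory quadrature is exact on it. Since `P` vanishes at the
nodes, `p` and `R` have the same quadrature sum, and since `deg Q < n`, orthogonality kills the
integral of `P * Q`. The argument is linear algebra: the integral may be any
linear map on polynomials.
-/

open Polynomial

section LinearFunctional

theorem map_mul_eq_zero_of_forall_map_mul_X_pow_eq_zero {A M : Type*} [CommSemiring A]
    [AddCommMonoid M] [Module A M] (L : A[X] →ₗ[A] M) {P Q : A[X]} {n : ℕ}
    (horth : ∀ k < n, L (P * X ^ k) = 0) (hQ : Q.degree < n) : L (P * Q) = 0 := by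
  rw [Q.as_sum_support_C_mul_X_pow, Finset.mul_sum, map_sum]
  refine Finset.sum_eq_zero fun k hk => ?_
  have hkn : k < n := by exact_mod_cast (le_degree_of_mem_supp k hk).trans_lt hQ
  rw [← smul_eq_C_mul, mul_smul_comm, map_smul, horth k hkn, smul_zero]

theorem degree_div_lt_of_degree_lt_degree_add {K : Type*} [Field K] {p q : K[X]} {n : ℕ}
    (h : p.degree < q.degree + n) : (p / q).degree < n := by
  have hq : q ≠ 0 := by
    rintro rfl
    simp at h
  rcases lt_or_ge p.degree q.degree with hlt | hle
  · rw [(Polynomial.div_eq_zero_iff hq).2 hlt, degree_zero]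
    exact WithBot.bot_lt_coe n
  · rw [← degree_add_div hq hle] at h
    exact lt_of_add_lt_add_left h

variable {ι K M : Type*} [DecidableEq ι] [Field K] [AddCommGroup M] [Module K M]
  (L : K[X] →ₗ[K] M) {s : Finset ι} {v : ι → K}

theorem sum_eval_smul_map_lagrange_basis (hv : Set.InjOn v s) {R : K[X]} (hR : R.degree < s.card) :
    ∑ i ∈ s, R.eval (v i) • L (Lagrange.basis s v i) = L R := by
  conv_rhs => rw [Lagrange.eq_interpolate hv hR]
  simp only [Lagrange.interpolate_apply, ← smul_eq_C_mul, map_sum, map_smul]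

theorem simultaneous_quadrature_exactness_general (hv : Set.InjOn v s) {P : K[X]}
    (hPdeg : P.degree = s.card) (hroot : ∀ i ∈ s, P.eval (v i) = 0) {n : ℕ}
    (horth : ∀ k < n, L (P * X ^ k) = 0) {p : K[X]} (hp : p.degree < s.card + n) :
    ∑ i ∈ s, p.eval (v i) • L (Lagrange.basis s v i) = L p := by
  have hP : P ≠ 0 := by
    rintro rfl
    simp at hPdeg
  have hdecomp : p % P + P * (p / P) = p := EuclideanDomain.mod_add_div p P
  have hmod : (p % P).degree < s.card := hPdeg ▸ EuclideanDomain.mod_lt p hP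
  have hdiv : (p / P).degree < n :=
    degree_div_lt_of_degree_lt_degree_add (hPdeg ▸ hp)
  have heval : ∀ i ∈ s, p.eval (v i) = (p % P).eval (v i) := fun i hi => by
    conv_lhs => rw [← hdecomp, eval_add, eval_mul, hroot i hi, zero_mul, add_zero]
  calc ∑ i ∈ s, p.eval (v i) • L (Lagrange.basis s v i)
      = ∑ i ∈ s, (p % P).eval (v i) • L (Lagrange.basis s v i) :=
        Finset.sum_congr rfl fun i hi => by rw [heval i hi]
    _ = L (p % P) := sum_eval_smul_map_lagrange_basis L hv hmod
    _ = L (p % P) + L (P * (p / P)) := by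
        rw [map_mul_eq_zero_of_forall_map_mul_X_pow_eq_zero L horth hdiv, add_zero]
    _ = L p := by rw [← map_add, hdecomp]

end LinearFunctional

section MomentFunctional

variable {𝕜 : Type*} [RCLike 𝕜] [MeasurableSpace 𝕜] {μ : Measure 𝕜}

theorem integrable_eval_of_integrable_pow (hmom : ∀ k : ℕ, Integrable (fun t : 𝕜 => t ^ k) μ)
    (p : 𝕜[X]) : Integrable (fun t => p.eval t) μ := by
  simp_rw [eval_eq_sum_range]
  exact integrable_finsetSum _ fun k _ => (hmom k).const_mul _

/-- The moment functional `p ↦ ∫ p dμ` of a measure with finite moments, which lets results about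
linear functionals on polynomials be applied to integrals. The moments are assumed finite in the
definition because the Bochner integral is not additive on non-integrable functions. -/
noncomputable def momentFunctional (hmom : ∀ k : ℕ, Integrable (fun t : 𝕜 => t ^ k) μ) :
    𝕜[X] →ₗ[𝕜] 𝕜 where
  toFun p := ∫ t, p.eval t ∂μ
  map_add' p q := by
    simp only [eval_add]
    exact integral_add (integrable_eval_of_integrable_pow hmom p)
      (integrable_eval_of_integrable_pow hmom q)
  map_smul' c p := by
    simp only [eval_smul, integral_smul, RingHom.id_apply]

theorem momentFunctional_apply (hmom : ∀ k : ℕ, Integrable (fun t : 𝕜 => t ^ k) μ) (p : 𝕜[X]) :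
    momentFunctional hmom p = ∫ t, p.eval t ∂μ :=
  rfl

end MomentFunctional

/-- **Simultaneous quadrature from multiple orthogonality.**
If `P` is a monic real polynomial of degree `N = n₁ + ⋯ + n_r` satisfying the multiple
orthogonality conditions `∫ P(x) xᵏ dμⱼ(x) = 0` for `0 ≤ k ≤ nⱼ − 1`, and `P` has `N`
distinct real zeros `x₁ < ⋯ < x_N`, then the interpolatory quadrature rule with weights
`λ_k^{(j)} = ∫ ℓ_k dμⱼ` (where `ℓ_k` is the `k`-th fundamental Lagrange polynomial for
the nodes) is exact for every polynomial of degree at most `N + nⱼ − 1`. -/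
theorem simultaneous_quadrature_exactness
    (r : ℕ) (hr : 1 ≤ r)
    (μ : Fin r → Measure ℝ) [∀ j, IsFiniteMeasure (μ j)]
    (hmom : ∀ j, ∀ k : ℕ, Integrable (fun t : ℝ => t ^ k) (μ j))
    (n : Fin r → ℕ) (hn : ∀ j, 1 ≤ n j)
    (N : ℕ) (hN : N = ∑ j, n j)
    (P : Polynomial ℝ) (hPmonic : P.Monic) (hPdeg : P.natDegree = N)
    (horth : ∀ j, ∀ k < n j, ∫ t, P.eval t * t ^ k ∂(μ j) = 0)
    (x : Fin N → ℝ) (hmono : StrictMono x) (hroot : ∀ i, P.eval (x i) = 0)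
    (w : Fin r → Fin N → ℝ)
    (hw : ∀ j i, w j i = ∫ t, (Lagrange.basis Finset.univ x i).eval t ∂(μ j)) :
    ∀ j, ∀ p : Polynomial ℝ, p.natDegree ≤ N + n j - 1 →
      ∑ i, w j i * p.eval (x i) = ∫ t, p.eval t ∂(μ j) := by
  intro j p hp
  have hPdegree : P.degree = N := hPdeg ▸ degree_eq_natDegree hPmonic.ne_zero
  have hpnat : p.natDegree < N + n j := Nat.lt_of_le_pred (Nat.add_pos_right N (hn j)) hp
  have hpdegree : p.degree < N + n j := degree_le_natDegree.trans_lt (by exact_mod_cast hpnat)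
  simpa [momentFunctional_apply, hw, mul_comm] using
    simultaneous_quadrature_exactness_general (momentFunctional (hmom j)) hmono.injective.injOn
      (by simpa using hPdegree) (fun i _ => hroot i)
      (by simpa [momentFunctional_apply] using horth j) (by simpa using hpdegree)
end

section
/- For every 1 ≤ k ≤ n, the weight λ_{n+k,2n}^{(1)} is nonzero with sign (−1)^{k−1}, and the weight λ_{k,2n}^{(2)} is nonzero with sign (−1)^{n−k}. In particular, the weights of the first quadrature rule at the nodes lying in [a₂,b₂] alternate in sign, as do the weights of the second quadrature rule at the nodes lying in [a₁,b₁]. -/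
open MeasureTheory

/-- The data of the diagonal type II multiple orthogonal polynomial for an
Angelesco system with two intervals: its `2n` zeros, listed in increasing
order, with `n` of them in `(a₁,b₁)` and `n` of them in `(a₂,b₂)`, and the
multiple orthogonality conditions. -/
structure Angelesco (μ₁ μ₂ : Measure ℝ) (a₁ b₁ a₂ b₂ : ℝ) (n : ℕ) where
  x : Fin (2 * n) → ℝ
  mono : StrictMono x
  mem1 : ∀ i : Fin (2 * n), (i : ℕ) < n → x i ∈ Set.Ioo a₁ b₁
  mem2 : ∀ i : Fin (2 * n), n ≤ (i : ℕ) → x i ∈ Set.Ioo a₂ b₂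
  orth1 : ∀ k < n, ∫ t, (∏ i, (t - x i)) * t ^ k ∂μ₁ = 0
  orth2 : ∀ k < n, ∫ t, (∏ i, (t - x i)) * t ^ k ∂μ₂ = 0

/-- The quadrature weight `λ_{k,2n}^{(μ)} = ∫ ℓ_{k,2n} dμ`, where `ℓ_{k,2n}` is the
`k`-th fundamental Lagrange polynomial for the nodes `x_{1,2n} < ⋯ < x_{2n,2n}`. -/
noncomputable def qweight {μ₁ μ₂ : Measure ℝ} {a₁ b₁ a₂ b₂ : ℝ} {n : ℕ}
    (ad : Angelesco μ₁ μ₂ a₁ b₁ a₂ b₂ n) (μ : Measure ℝ) (k : Fin (2 * n)) : ℝ :=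
  ∫ t, (Lagrange.basis Finset.univ ad.x k).eval t ∂μ

/-!
Fix a node `x_j` outside a block `S` of nodes on which `μ` supplies `#S` orthogonality relations,
and split the fundamental polynomial as `ℓ_j = A * B`, where `A` collects the factors of the nodes
in `S` and `B` those of the remaining nodes. Since `A(x_j) = 1`, the polynomial
`A² * B - A * B = A * B * (A - 1)` is a multiple of the nodal polynomial by a factor of degree
less than `#S`, so `∫ ℓ_j dμ = ∫ A² * B dμ`. When `μ` lives on one side of the nodes outside `S`,
the sign of `B` on its support is constant and is found by counting the negative factors of `B`.
-/

open Finset Polynomial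

section PolynomialIntegrals

variable {μ : Measure ℝ}

lemma integrable_eval_of_moments (hmom : ∀ k : ℕ, Integrable (fun t : ℝ => t ^ k) μ) (p : ℝ[X]) :
    Integrable (fun t => p.eval t) μ := by
  simp only [eval_eq_sum_range]
  exact integrable_finsetSum _ fun k _ => (hmom k).const_mul _

lemma integral_eval_mul_eq_zero_of_orthogonal
    (hmom : ∀ k : ℕ, Integrable (fun t : ℝ => t ^ k) μ) {p q : ℝ[X]} {d : ℕ}
    (horth : ∀ k < d, ∫ t, p.eval t * t ^ k ∂μ = 0) (hq : q.degree < d) :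
    ∫ t, (p * q).eval t ∂μ = 0 := by
  have expand (t : ℝ) : (p * q).eval t = ∑ k ∈ range d, q.coeff k * (p.eval t * t ^ k) := by
    rcases eq_or_ne q 0 with rfl | hq0
    · simp
    · rw [eval_mul, eval_eq_sum_range' ((natDegree_lt_iff_degree_lt hq0).2 hq), mul_sum]
      exact sum_congr rfl fun k _ => by ring
  have term_integrable (k : ℕ) : Integrable (fun t => p.eval t * t ^ k) μ := by
    have integrable_mul := integrable_eval_of_moments hmom (p * X ^ k)
    simpa only [eval_mul, eval_pow, eval_X] using integrable_mul
  simp only [expand]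
  rw [integral_finsetSum _ fun k _ => (term_integrable k).const_mul _]
  refine sum_eq_zero fun k hk => ?_
  rw [integral_const_mul, horth k (mem_range.1 hk), mul_zero]

lemma integral_eval_pos_of_ae_nonneg (hmom : ∀ k : ℕ, Integrable (fun t : ℝ => t ^ k) μ)
    (hinf : ∀ s : Finset ℝ, μ (s : Set ℝ)ᶜ ≠ 0) {p : ℝ[X]} (hp : p ≠ 0)
    (hnonneg : ∀ᵐ t ∂μ, 0 ≤ p.eval t) : 0 < ∫ t, p.eval t ∂μ := by
  rw [integral_pos_iff_support_of_nonneg_ae hnonneg (integrable_eval_of_moments hmom p)]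
  have compl_roots_eq_support :
      (p.roots.toFinset : Set ℝ)ᶜ = Function.support fun t => p.eval t := by
    ext t
    simp [hp]
  rw [← compl_roots_eq_support]
  exact pos_iff_ne_zero.2 (hinf _)

end PolynomialIntegrals

section LagrangeBasis

variable {F ι : Type*} [Field F] [DecidableEq ι] {s S : Finset ι} {v : ι → F} {j : ι}

lemma eval_lagrange_basis_eq_prod (s : Finset ι) (v : ι → F) (j : ι) (t : F) :
    (Lagrange.basis s v j).eval t = ∏ i ∈ s.erase j, (v j - v i)⁻¹ * (t - v i) := by
  simp [Lagrange.basis, Lagrange.basisDivisor, eval_prod]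

lemma lagrange_basis_mul_X_sub_C (hj : j ∈ s) :
    Lagrange.basis s v j * (X - C (v j)) = C (Lagrange.nodalWeight s v j) * Lagrange.nodal s v := by
  rw [Lagrange.basis_eq_prod_sub_inv_mul_nodal_div hj, ← Lagrange.nodal_erase_eq_nodal_div hj,
    Lagrange.nodal_eq_mul_nodal_erase hj]
  ring

lemma lagrange_basis_eq_basis_insert_mul_basis_sdiff (hS : S ⊆ s) (hj : j ∉ S) :
    Lagrange.basis s v j = Lagrange.basis (insert j S) v j * Lagrange.basis (s \ S) v j := by
  have disjoint_blocks : Disjoint S ((s \ S).erase j) :=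
    disjoint_sdiff.mono_right (erase_subset _ _)
  have union_blocks : S ∪ (s \ S).erase j = s.erase j := by
    rw [← erase_eq_of_notMem hj, ← erase_union_distrib, erase_eq_of_notMem hj,
      union_sdiff_of_subset hS]
  simp only [Lagrange.basis]
  rw [erase_insert hj, ← prod_union disjoint_blocks, union_blocks]

lemma exists_lagrange_basis_mul_sub_one_eq_nodal_mul (hv : Set.InjOn v s) (hS : S ⊆ s)
    (hjs : j ∈ s) (hjS : j ∉ S) :
    ∃ q : F[X], q.degree < #S ∧
      Lagrange.basis s v j * (Lagrange.basis (insert j S) v j - 1) = Lagrange.nodal s v * q := by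
  set A := Lagrange.basis (insert j S) v j with hA
  have hvS : Set.InjOn v (insert j S : Finset ι) := hv.mono (by simp [Set.insert_subset_iff, *])
  have hjA : j ∈ insert j S := mem_insert_self j S
  have degree_A : A.degree = #S := by
    rw [hA, Lagrange.degree_basis hvS hjA, card_insert_of_notMem hjS, Nat.add_sub_cancel]
  have A_sub_one : A - 1 = (X - C (v j)) * (A /ₘ (X - C (v j))) := by
    have division := modByMonic_add_div A (X - C (v j))
    rw [modByMonic_X_sub_C_eq_C_eval, hA, Lagrange.eval_basis_self hvS hjA, C_1, ← hA] at division
    exact sub_eq_of_eq_add' division.symm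
  refine ⟨C (Lagrange.nodalWeight s v j) * (A /ₘ (X - C (v j))), ?_, ?_⟩
  · calc (C (Lagrange.nodalWeight s v j) * (A /ₘ (X - C (v j)))).degree
        ≤ (A /ₘ (X - C (v j))).degree := by
          rw [← smul_eq_C_mul]
          exact degree_smul_le _ _
      _ < A.degree := degree_divByMonic_lt _ _ (Lagrange.basis_ne_zero hvS hjA) (by simp)
      _ = #S := degree_A
  · rw [A_sub_one, ← mul_assoc, lagrange_basis_mul_X_sub_C hjs]
    ring

end LagrangeBasis

section SignOfLagrangeBasis

lemma neg_one_pow_card_filter_mul_prod_nonneg {R ι : Type*} [CommRing R] [LinearOrder R]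
    [IsStrictOrderedRing R] (s : Finset ι) (p : ι → Prop) [DecidablePred p] {f : ι → R}
    (hneg : ∀ i ∈ s, p i → f i ≤ 0) (hpos : ∀ i ∈ s, ¬ p i → 0 ≤ f i) :
    0 ≤ (-1) ^ #{i ∈ s | p i} * ∏ i ∈ s, f i := by
  rw [← prod_const, prod_filter, ← prod_mul_distrib]
  refine prod_nonneg fun i hi => ?_
  by_cases hpi : p i
  · simpa [hpi] using hneg i hi hpi
  · simpa [hpi] using hpos i hi hpi

variable {F ι : Type*} [Field F] [LinearOrder F] [IsStrictOrderedRing F] [LinearOrder ι]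
  {s : Finset ι} {v : ι → F} {t : F}

lemma neg_one_pow_mul_eval_lagrange_basis_nonneg_of_le (hv : Monotone v)
    (ht : ∀ i ∈ s, t ≤ v i) (j : ι) :
    0 ≤ (-1) ^ #{i ∈ s | i < j} * (Lagrange.basis s v j).eval t := by
  have count_erase : {i ∈ s.erase j | i < j} = {i ∈ s | i < j} := by
    rw [filter_erase, erase_eq_of_notMem (by simp)]
  rw [eval_lagrange_basis_eq_prod, ← count_erase]
  refine neg_one_pow_card_filter_mul_prod_nonneg _ _ (fun i hi hij => ?_) (fun i hi hij => ?_)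
  all_goals have ht_sub : t - v i ≤ 0 := sub_nonpos.2 (ht i (mem_of_mem_erase hi))
  · exact mul_nonpos_of_nonneg_of_nonpos (inv_nonneg.2 (sub_nonneg.2 (hv hij.le))) ht_sub
  · exact mul_nonneg_of_nonpos_of_nonpos (inv_nonpos.2 (sub_nonpos.2 (hv (not_lt.1 hij)))) ht_sub

lemma neg_one_pow_mul_eval_lagrange_basis_nonneg_of_ge (hv : Monotone v)
    (ht : ∀ i ∈ s, v i ≤ t) (j : ι) :
    0 ≤ (-1) ^ #{i ∈ s | j < i} * (Lagrange.basis s v j).eval t := by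
  have count_erase : {i ∈ s.erase j | j < i} = {i ∈ s | j < i} := by
    rw [filter_erase, erase_eq_of_notMem (by simp)]
  rw [eval_lagrange_basis_eq_prod, ← count_erase]
  refine neg_one_pow_card_filter_mul_prod_nonneg _ _ (fun i hi hij => ?_) (fun i hi hij => ?_)
  all_goals have ht_sub : 0 ≤ t - v i := sub_nonneg.2 (ht i (mem_of_mem_erase hi))
  · exact mul_nonpos_of_nonpos_of_nonneg (inv_nonpos.2 (sub_nonpos.2 (hv hij.le))) ht_sub
  · exact mul_nonneg (inv_nonneg.2 (sub_nonneg.2 (hv (not_lt.1 hij)))) ht_sub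

end SignOfLagrangeBasis

section QuadratureWeights

variable {μ : Measure ℝ} {ι : Type*} {s S : Finset ι} {v : ι → ℝ} {j : ι}

lemma integral_lagrange_basis_eq_integral_sq_mul [DecidableEq ι]
    (hmom : ∀ k : ℕ, Integrable (fun t : ℝ => t ^ k) μ)
    (hv : Set.InjOn v s) (hS : S ⊆ s) (hjs : j ∈ s) (hjS : j ∉ S)
    (horth : ∀ k < #S, ∫ t, (Lagrange.nodal s v).eval t * t ^ k ∂μ = 0) :
    ∫ t, (Lagrange.basis s v j).eval t ∂μ =
      ∫ t, (Lagrange.basis (insert j S) v j ^ 2 * Lagrange.basis (s \ S) v j).eval t ∂μ := by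
  obtain ⟨q, hq, hnodal⟩ := exists_lagrange_basis_mul_sub_one_eq_nodal_mul hv hS hjs hjS
  have sq_mul_eq : Lagrange.basis (insert j S) v j ^ 2 * Lagrange.basis (s \ S) v j =
      Lagrange.basis s v j + Lagrange.nodal s v * q := by
    rw [← hnodal, lagrange_basis_eq_basis_insert_mul_basis_sdiff hS hjS]
    ring
  simp only [sq_mul_eq, eval_add]
  rw [integral_add (integrable_eval_of_moments hmom _) (integrable_eval_of_moments hmom _),
    integral_eval_mul_eq_zero_of_orthogonal hmom horth hq, add_zero]

lemma mul_integral_lagrange_basis_pos [DecidableEq ι]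
    (hmom : ∀ k : ℕ, Integrable (fun t : ℝ => t ^ k) μ)
    (hinf : ∀ u : Finset ℝ, μ (u : Set ℝ)ᶜ ≠ 0)
    (hv : Set.InjOn v s) (hS : S ⊆ s) (hjs : j ∈ s) (hjS : j ∉ S)
    (horth : ∀ k < #S, ∫ t, (Lagrange.nodal s v).eval t * t ^ k ∂μ = 0)
    {ε : ℝ} (hε : ε ≠ 0) (hsign : ∀ᵐ t ∂μ, 0 ≤ ε * (Lagrange.basis (s \ S) v j).eval t) :
    0 < ε * ∫ t, (Lagrange.basis s v j).eval t ∂μ := by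
  set A := Lagrange.basis (insert j S) v j
  set B := Lagrange.basis (s \ S) v j
  have A_mul_B_ne_zero : A * B ≠ 0 := by
    rw [← lagrange_basis_eq_basis_insert_mul_basis_sdiff hS hjS]
    exact Lagrange.basis_ne_zero hv hjs
  have integrand_ne_zero : C ε * (A ^ 2 * B) ≠ 0 :=
    mul_ne_zero (C_ne_zero.2 hε) <|
      mul_ne_zero (pow_ne_zero 2 (left_ne_zero_of_mul A_mul_B_ne_zero))
        (right_ne_zero_of_mul A_mul_B_ne_zero)
  have integrand_nonneg : ∀ᵐ t ∂μ, 0 ≤ (C ε * (A ^ 2 * B)).eval t := by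
    filter_upwards [hsign] with t ht
    simp only [eval_mul, eval_C, eval_pow]
    rw [mul_left_comm]
    exact mul_nonneg (sq_nonneg _) ht
  have integral_pos := integral_eval_pos_of_ae_nonneg hmom hinf integrand_ne_zero integrand_nonneg
  simp only [eval_C_mul] at integral_pos
  rwa [integral_const_mul,
    ← integral_lagrange_basis_eq_integral_sq_mul hmom hv hS hjs hjS horth] at integral_pos

variable [LinearOrder ι]

lemma neg_one_pow_mul_integral_lagrange_basis_pos_of_ae_le
    (hmom : ∀ k : ℕ, Integrable (fun t : ℝ => t ^ k) μ)
    (hinf : ∀ u : Finset ℝ, μ (u : Set ℝ)ᶜ ≠ 0)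
    (hv : StrictMono v) (hS : S ⊆ s) (hjs : j ∈ s) (hjS : j ∉ S)
    (horth : ∀ k < #S, ∫ t, (Lagrange.nodal s v).eval t * t ^ k ∂μ = 0)
    (hle : ∀ᵐ t ∂μ, ∀ i ∈ s \ S, t ≤ v i) :
    0 < (-1) ^ #{i ∈ s \ S | i < j} * ∫ t, (Lagrange.basis s v j).eval t ∂μ :=
  mul_integral_lagrange_basis_pos hmom hinf hv.injective.injOn hS hjs hjS horth
    (pow_ne_zero _ (by norm_num)) <|
    hle.mono fun _ ht => neg_one_pow_mul_eval_lagrange_basis_nonneg_of_le hv.monotone ht j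

lemma neg_one_pow_mul_integral_lagrange_basis_pos_of_ae_ge
    (hmom : ∀ k : ℕ, Integrable (fun t : ℝ => t ^ k) μ)
    (hinf : ∀ u : Finset ℝ, μ (u : Set ℝ)ᶜ ≠ 0)
    (hv : StrictMono v) (hS : S ⊆ s) (hjs : j ∈ s) (hjS : j ∉ S)
    (horth : ∀ k < #S, ∫ t, (Lagrange.nodal s v).eval t * t ^ k ∂μ = 0)
    (hge : ∀ᵐ t ∂μ, ∀ i ∈ s \ S, v i ≤ t) :
    0 < (-1) ^ #{i ∈ s \ S | j < i} * ∫ t, (Lagrange.basis s v j).eval t ∂μ :=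
  mul_integral_lagrange_basis_pos hmom hinf hv.injective.injOn hS hjs hjS horth
    (pow_ne_zero _ (by norm_num)) <|
    hge.mono fun _ ht => neg_one_pow_mul_eval_lagrange_basis_nonneg_of_ge hv.monotone ht j

end QuadratureWeights

section FinNodes

lemma pos_and_neg_of_neg_one_pow_mul_pos {R : Type*} [Ring R] [LinearOrder R]
    [IsStrictOrderedRing R] {e : ℕ} {w : R} (h : 0 < (-1) ^ e * w) :
    (Even e → 0 < w) ∧ (¬ Even e → w < 0) := by
  constructor
  · intro he
    simpa [he.neg_one_pow] using h
  · intro he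
    simpa [(Nat.not_even_iff_odd.1 he).neg_one_pow] using h

variable {μ : Measure ℝ} {N m : ℕ} {x : Fin N → ℝ} {i : Fin N}

lemma neg_one_pow_mul_integral_lagrange_basis_pos_of_ae_le_last
    (hmom : ∀ k : ℕ, Integrable (fun t : ℝ => t ^ k) μ)
    (hinf : ∀ u : Finset ℝ, μ (u : Set ℝ)ᶜ ≠ 0)
    (hx : StrictMono x) (horth : ∀ k < m, ∫ t, (∏ l, (t - x l)) * t ^ k ∂μ = 0)
    (hle : ∀ᵐ t ∂μ, ∀ l : Fin N, m ≤ l → t ≤ x l) (hi : m ≤ i) :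
    0 < (-1) ^ (i - m : ℕ) * ∫ t, (Lagrange.basis univ x i).eval t ∂μ := by
  have card_first : #{l : Fin N | (l : ℕ) < m} = m := by
    rw [Fin.card_filter_val_lt]
    omega
  have count_between : #{l ∈ univ \ ({l | (l : ℕ) < m} : Finset (Fin N)) | l < i} = i - m := by
    have between_eq_Ico :
        {l ∈ univ \ ({l | (l : ℕ) < m} : Finset (Fin N)) | l < i} = Ico ⟨m, by omega⟩ i := by
      ext l
      simp [Fin.le_def]
    simp [between_eq_Ico]
  rw [← count_between]
  refine neg_one_pow_mul_integral_lagrange_basis_pos_of_ae_le hmom hinf hx (subset_univ _)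
    (mem_univ i) (by simpa using hi) ?_ (by simpa using hle)
  simpa only [card_first, Lagrange.eval_nodal] using horth

lemma neg_one_pow_mul_integral_lagrange_basis_pos_of_ae_ge_first
    (hmom : ∀ k : ℕ, Integrable (fun t : ℝ => t ^ k) μ)
    (hinf : ∀ u : Finset ℝ, μ (u : Set ℝ)ᶜ ≠ 0)
    (hx : StrictMono x) (hm : m ≤ N)
    (horth : ∀ k < N - m, ∫ t, (∏ l, (t - x l)) * t ^ k ∂μ = 0)
    (hge : ∀ᵐ t ∂μ, ∀ l : Fin N, l < m → x l ≤ t) (hi : i < m) :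
    0 < (-1) ^ (m - 1 - i : ℕ) * ∫ t, (Lagrange.basis univ x i).eval t ∂μ := by
  have card_last : #{l : Fin N | m ≤ (l : ℕ)} = N - m := by
    simp only [← not_lt]
    rw [← compl_filter, card_compl, Fin.card_filter_val_lt, Fintype.card_fin, min_eq_right hm]
  have count_between : #{l ∈ univ \ ({l | m ≤ (l : ℕ)} : Finset (Fin N)) | i < l} = m - 1 - i := by
    have between_eq_attachFin :
        {l ∈ univ \ ({l | m ≤ (l : ℕ)} : Finset (Fin N)) | i < l} =
          (Ioo (i : ℕ) m).attachFin fun l hl => (mem_Ioo.1 hl).2.trans_le hm := by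
      ext l
      simp [and_comm]
    rw [between_eq_attachFin, card_attachFin, Nat.card_Ioo]
    omega
  rw [← count_between]
  refine neg_one_pow_mul_integral_lagrange_basis_pos_of_ae_ge hmom hinf hx (subset_univ _)
    (mem_univ i) (by simpa using hi) ?_ (by simpa using hge)
  simpa only [card_last, Lagrange.eval_nodal] using horth

end FinNodes

theorem angelesco_weights_alternating_general {μ₁ μ₂ : Measure ℝ}
    (hinf₁ : ∀ s : Finset ℝ, μ₁ (s : Set ℝ)ᶜ ≠ 0) (hinf₂ : ∀ s : Finset ℝ, μ₂ (s : Set ℝ)ᶜ ≠ 0)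
    (hmom₁ : ∀ k : ℕ, Integrable (fun t : ℝ => t ^ k) μ₁)
    (hmom₂ : ∀ k : ℕ, Integrable (fun t : ℝ => t ^ k) μ₂)
    {N n₁ n₂ : ℕ} (hN : N = n₁ + n₂) {x : Fin N → ℝ} (hx : StrictMono x)
    (horth₁ : ∀ k < n₁, ∫ t, (∏ l, (t - x l)) * t ^ k ∂μ₁ = 0)
    (horth₂ : ∀ k < n₂, ∫ t, (∏ l, (t - x l)) * t ^ k ∂μ₂ = 0)
    (hle : ∀ᵐ t ∂μ₁, ∀ l : Fin N, n₁ ≤ l → t ≤ x l)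
    (hge : ∀ᵐ t ∂μ₂, ∀ l : Fin N, l < n₁ → x l ≤ t) :
    (∀ i : Fin N, n₁ ≤ (i : ℕ) →
      (Even ((i : ℕ) - n₁) → 0 < ∫ t, (Lagrange.basis univ x i).eval t ∂μ₁) ∧
      (¬ Even ((i : ℕ) - n₁) → ∫ t, (Lagrange.basis univ x i).eval t ∂μ₁ < 0)) ∧
    (∀ i : Fin N, (i : ℕ) < n₁ →
      (Even (n₁ - 1 - (i : ℕ)) → 0 < ∫ t, (Lagrange.basis univ x i).eval t ∂μ₂) ∧
      (¬ Even (n₁ - 1 - (i : ℕ)) → ∫ t, (Lagrange.basis univ x i).eval t ∂μ₂ < 0)) := by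
  have hn₂ : N - n₁ = n₂ := by omega
  refine ⟨fun i hi => pos_and_neg_of_neg_one_pow_mul_pos ?_,
    fun i hi => pos_and_neg_of_neg_one_pow_mul_pos ?_⟩
  · exact neg_one_pow_mul_integral_lagrange_basis_pos_of_ae_le_last hmom₁ hinf₁ hx horth₁ hle hi
  · exact neg_one_pow_mul_integral_lagrange_basis_pos_of_ae_ge_first hmom₂ hinf₂ hx (by omega)
      (hn₂ ▸ horth₂) hge hi

namespace Angelesco

variable {μ₁ μ₂ : Measure ℝ} {a₁ b₁ a₂ b₂ : ℝ} {n : ℕ}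

lemma ae_le_node (ad : Angelesco μ₁ μ₂ a₁ b₁ a₂ b₂ n) (hgap : b₁ ≤ a₂)
    {μ : Measure ℝ} (hsupp : μ (Set.Icc a₁ b₁)ᶜ = 0) :
    ∀ᵐ t ∂μ, ∀ l : Fin (2 * n), n ≤ l → t ≤ ad.x l := by
  have ae_mem : ∀ᵐ t ∂μ, t ∈ Set.Icc a₁ b₁ := hsupp
  filter_upwards [ae_mem] with t ht l hl
  exact ht.2.trans (hgap.trans (ad.mem2 l hl).1.le)

lemma ae_node_le (ad : Angelesco μ₁ μ₂ a₁ b₁ a₂ b₂ n) (hgap : b₁ ≤ a₂)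
    {μ : Measure ℝ} (hsupp : μ (Set.Icc a₂ b₂)ᶜ = 0) :
    ∀ᵐ t ∂μ, ∀ l : Fin (2 * n), l < n → ad.x l ≤ t := by
  have ae_mem : ∀ᵐ t ∂μ, t ∈ Set.Icc a₂ b₂ := hsupp
  filter_upwards [ae_mem] with t ht l hl
  exact (ad.mem1 l hl).2.le.trans (hgap.trans ht.1)

end Angelesco

/-- **Alternating signs of the quadrature weights on the other interval.**
For `1 ≤ k ≤ n`, the weight `λ_{n+k,2n}^{(1)}` is nonzero with sign `(−1)^{k−1}`, and
the weight `λ_{k,2n}^{(2)}` is nonzero with sign `(−1)^{n−k}`.  (Here nodes are indexed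
by `i : Fin (2n)`, so the node `x_{n+k,2n}` corresponds to `i` with `i ≥ n` and
`k − 1 = i − n`, and the node `x_{k,2n}` to `i` with `i < n` and `n − k = n − 1 − i`.) -/
theorem angelesco_weights_alternating
    (μ₁ μ₂ : Measure ℝ) [IsFiniteMeasure μ₁] [IsFiniteMeasure μ₂]
    (a₁ b₁ a₂ b₂ : ℝ) (hab₁ : a₁ < b₁) (hgap : b₁ ≤ a₂) (hab₂ : a₂ < b₂)
    (hsupp₁ : μ₁ (Set.Icc a₁ b₁)ᶜ = 0) (hsupp₂ : μ₂ (Set.Icc a₂ b₂)ᶜ = 0)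
    (hinf₁ : ∀ s : Finset ℝ, μ₁ ((s : Set ℝ))ᶜ ≠ 0)
    (hinf₂ : ∀ s : Finset ℝ, μ₂ ((s : Set ℝ))ᶜ ≠ 0)
    (hmom₁ : ∀ k : ℕ, Integrable (fun t : ℝ => t ^ k) μ₁)
    (hmom₂ : ∀ k : ℕ, Integrable (fun t : ℝ => t ^ k) μ₂)
    (n : ℕ) (hn : 1 ≤ n) (ad : Angelesco μ₁ μ₂ a₁ b₁ a₂ b₂ n) :
    (∀ i : Fin (2 * n), n ≤ (i : ℕ) →
      (Even ((i : ℕ) - n) → 0 < qweight ad μ₁ i) ∧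
      (¬ Even ((i : ℕ) - n) → qweight ad μ₁ i < 0)) ∧
    (∀ i : Fin (2 * n), (i : ℕ) < n →
      (Even (n - 1 - (i : ℕ)) → 0 < qweight ad μ₂ i) ∧
      (¬ Even (n - 1 - (i : ℕ)) → qweight ad μ₂ i < 0)) :=
  angelesco_weights_alternating_general hinf₁ hinf₂ hmom₁ hmom₂ (two_mul n) ad.mono ad.orth1
    ad.orth2 (ad.ae_le_node hgap hsupp₁) (ad.ae_node_le hgap hsupp₂)
end

section
/- Let b ∈ ℝ and let t₁,…,t_n be real numbers with t_i > b for every i, and set q(x) = ∏_{i=1}^{n} (t_i − x). Then for every integer j ≥ 0 and every x ≤ b, the j-th derivative of 1/q at x is strictly positive: (d^j/dx^j)(1/q)(x) > 0. -/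
/-! Each factor `1 / (tᵢ - x)` has derivatives `j! / (tᵢ - x) ^ (j + 1) > 0` to the left of `tᵢ`.
By the Leibniz rule, whose binomial coefficients are positive, positivity of all derivatives at a
point passes to products. -/

open Finset

open scoped Nat

theorem iteratedDeriv_inv_const_sub {𝕜 : Type*} [NontriviallyNormedField 𝕜] (j : ℕ) (c x : 𝕜) :
    iteratedDeriv j (fun y => (c - y)⁻¹) x = j ! / (c - x) ^ (j + 1) := by
  have sign_cancel : (-1 : 𝕜) ^ j * (-1) ^ j = 1 := by rw [← mul_pow]; simp
  have exponent_eq : (-1 - j : ℤ) = -((j + 1 : ℕ) : ℤ) := by push_cast; ring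
  calc iteratedDeriv j (fun y => (c - y)⁻¹) x
    _ = (-1) ^ j * iteratedDeriv j Inv.inv (c - x) :=
      congrFun (iteratedDeriv_comp_const_sub j Inv.inv c) x
    _ = (-1) ^ j * ((-1) ^ j * j ! * (c - x) ^ (-1 - j : ℤ)) := by
      rw [iteratedDeriv_eq_iterate, iter_deriv_inv]
    _ = j ! / (c - x) ^ (j + 1) := by
      rw [← mul_assoc, ← mul_assoc, sign_cancel, one_mul, exponent_eq, zpow_neg, zpow_natCast,
        div_eq_mul_inv]

theorem iteratedDeriv_inv_const_sub_pos (j : ℕ) {c x : ℝ} (hx : x < c) :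
    0 < iteratedDeriv j (fun y => (c - y)⁻¹) x := by
  have : 0 < c - x := sub_pos.2 hx
  rw [iteratedDeriv_inv_const_sub]
  positivity

theorem iteratedDeriv_mul_pos {f g : ℝ → ℝ} {x : ℝ} {j : ℕ}
    (hf : ContDiffAt ℝ j f x) (hg : ContDiffAt ℝ j g x)
    (hf_pos : ∀ k ≤ j, 0 < iteratedDeriv k f x) (hg_pos : ∀ k ≤ j, 0 < iteratedDeriv k g x) :
    0 < iteratedDeriv j (f * g) x := by
  rw [iteratedDeriv_mul hf hg]
  refine sum_pos (fun k hk => ?_) nonempty_range_add_one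
  have hkj : k ≤ j := mem_range_succ_iff.1 hk
  have choose_pos : (0 : ℝ) < j.choose k := mod_cast Nat.choose_pos hkj
  exact mul_pos (mul_pos choose_pos (hf_pos k hkj)) (hg_pos (j - k) (j.sub_le k))

theorem iteratedDeriv_prod_pos {ι : Type*} {s : Finset ι} (hs : s.Nonempty) {f : ι → ℝ → ℝ}
    {x : ℝ} {j : ℕ} (hf : ∀ i ∈ s, ContDiffAt ℝ j (f i) x)
    (hf_pos : ∀ i ∈ s, ∀ k ≤ j, 0 < iteratedDeriv k (f i) x) :
    0 < iteratedDeriv j (∏ i ∈ s, f i) x := by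
  -- The Leibniz rule involves all lower derivatives, so they are carried through the induction.
  suffices h : ContDiffAt ℝ j (∏ i ∈ s, f i) x ∧
      ∀ k ≤ j, 0 < iteratedDeriv k (∏ i ∈ s, f i) x from h.2 j le_rfl
  refine prod_induction_nonempty f
    (fun g => ContDiffAt ℝ j g x ∧ ∀ k ≤ j, 0 < iteratedDeriv k g x) ?_ hs
    fun i hi => ⟨hf i hi, hf_pos i hi⟩
  rintro g h ⟨hg, hg_pos⟩ ⟨hh, hh_pos⟩
  refine ⟨hg.mul hh, fun k hk => ?_⟩
  have hkj : (k : WithTop ℕ∞) ≤ j := mod_cast hk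
  exact iteratedDeriv_mul_pos (hg.of_le hkj) (hh.of_le hkj)
    (fun l hl => hg_pos l (hl.trans hk)) fun l hl => hh_pos l (hl.trans hk)

/-- **Positivity of all derivatives of `1/q`.**
Let `q(x) = ∏_{i=1}^{n} (tᵢ − x)` with every `tᵢ > b`.  Then for every `j ≥ 0`
and every `x ≤ b`, the `j`-th derivative of `1/q` at `x` is strictly positive. -/
theorem iteratedDeriv_one_div_prod_pos
    (n : ℕ) (hn : 1 ≤ n) (b : ℝ) (t : Fin n → ℝ) (ht : ∀ i, b < t i) :
    ∀ j : ℕ, ∀ x ≤ b, 0 < iteratedDeriv j (fun y : ℝ => 1 / ∏ i, (t i - y)) x := by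
  intro j x hx
  have x_lt (i : Fin n) : x < t i := hx.trans_lt (ht i)
  have one_div_eq_prod : (fun y : ℝ => 1 / ∏ i, (t i - y)) = ∏ i, fun y => (t i - y)⁻¹ := by
    ext y
    simp
  have hne : (univ : Finset (Fin n)).Nonempty := ⟨⟨0, hn⟩, mem_univ _⟩
  rw [one_div_eq_prod]
  refine iteratedDeriv_prod_pos hne (fun i _ => ?_) fun i _ k _ =>
    iteratedDeriv_inv_const_sub_pos k (x_lt i)
  exact (contDiffAt_const.sub contDiffAt_id).inv (sub_pos.2 (x_lt i)).ne'
end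

section
/- For all real numbers a < b < t, one has (1/π) ∫_a^b (1/(t − x)) √((x − a)/(b − x)) dx = −1 + √((t − a)/(t − b)). -/
/-!
Since `(x - a) / (t - x) = (t - a) / (t - x) - 1`, the integrand is the difference of two multiples
of the arcsine density `1 / √((x - a) * (b - x))`, by the factors `(t - a) / (t - x)` and `1`.
Both come from the same source: the Möbius map `y` of the interval `[a, b]` onto `[0, 1]` with
`y / (1 - y) = (x - a) / (r * (b - x))` turns `2 * √r * arcsin √y` into a function of `x` that is
continuous on `[a, b]`, increases by `π * √r`, and whose derivative is the arcsine density times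
`r * (b - a) / (x - a + r * (b - x))`. This factor is `(t - a) / (t - x)` for
`r = (t - a) / (t - b)`, and `1` for `r = 1`.
-/

open MeasureTheory Set Real

theorem sqrt_div_eq_div_sqrt_mul {p q : ℝ} (hp : 0 ≤ p) : √(p / q) = p / √(p * q) := by
  rw [sqrt_div hp, sqrt_mul hp, ← div_div, div_sqrt]

theorem hasDerivAt_arcsin_sqrt {y : ℝ} (hy₀ : 0 < y) (hy₁ : y < 1) :
    HasDerivAt (fun z => arcsin √z) (1 / (2 * √(y * (1 - y)))) y := by
  have sqrt_lt_one : √y < 1 := (sqrt_lt' one_pos).2 (by simpa using hy₁)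
  have hasDerivAt_comp :=
    (hasDerivAt_arcsin (by linarith [sqrt_nonneg y]) sqrt_lt_one.ne).comp y
      (hasDerivAt_sqrt hy₀.ne')
  refine hasDerivAt_comp.congr_deriv ?_
  rw [sq_sqrt hy₀.le, sqrt_mul hy₀.le, one_div_mul_one_div]
  ring

/-- The Möbius map taking `[a, b]` onto `[0, 1]` whose value `y` at `x` satisfies
`y / (1 - y) = (x - a) / (r * (b - x))`, for `0 < r`. It is the change of variable that brings
`arcsineKernel a b r` to a multiple of the arcsine density of `[0, 1]`. -/
noncomputable def unitMoebius (a b r x : ℝ) : ℝ :=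
  (x - a) / (x - a + r * (b - x))

/-- The arcsine density of `[a, b]` without its normalization `1 / π`, weighted by a factor with
a simple pole outside `[a, b]` whose position is encoded by `r`: a pole at `t` corresponds to
`r = (t - a) / (t - b)`, a pole at infinity to `r = 1`. -/
noncomputable def arcsineKernel (a b r x : ℝ) : ℝ :=
  r * (b - a) / (x - a + r * (b - x)) / √((x - a) * (b - x))

/-- The antiderivative of `arcsineKernel a b r` vanishing at `a`. The form with `arcsin`, rather
than `arctan √((x - a) / (r * (b - x)))`, is continuous up to the endpoint `b`. -/
noncomputable def arcsinePrimitive (a b r x : ℝ) : ℝ :=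
  2 * √r * arcsin √(unitMoebius a b r x)

section Kernel

variable {a b r x : ℝ}

theorem sub_add_mul_sub_pos (hr : 0 < r) (hab : a < b) (hx : x ∈ Icc a b) :
    0 < x - a + r * (b - x) := by
  rcases hx.1.eq_or_lt with rfl | hax
  · simpa using mul_pos hr (sub_pos.2 hab)
  · linarith [mul_nonneg hr.le (sub_nonneg.2 hx.2)]

theorem arcsinePrimitive_left (a b r : ℝ) : arcsinePrimitive a b r a = 0 := by
  simp [arcsinePrimitive, unitMoebius]

theorem arcsinePrimitive_right (hab : a ≠ b) (r : ℝ) : arcsinePrimitive a b r b = π * √r := by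
  have moebius_right : unitMoebius a b r b = 1 := by
    simp [unitMoebius, sub_ne_zero.2 hab.symm]
  rw [arcsinePrimitive, moebius_right, sqrt_one, arcsin_one]
  ring

theorem one_sub_unitMoebius (h : x - a + r * (b - x) ≠ 0) :
    1 - unitMoebius a b r x = r * (b - x) / (x - a + r * (b - x)) := by
  rw [unitMoebius, one_sub_div h, add_sub_cancel_left]

theorem hasDerivAt_unitMoebius (h : x - a + r * (b - x) ≠ 0) :
    HasDerivAt (unitMoebius a b r) (r * (b - a) / (x - a + r * (b - x)) ^ 2) x := by
  have hasDerivAt_num : HasDerivAt (fun z => z - a) 1 x := (hasDerivAt_id' x).sub_const a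
  have hasDerivAt_den : HasDerivAt (fun z => z - a + r * (b - z)) (1 + r * -1) x :=
    hasDerivAt_num.add (((hasDerivAt_id' x).const_sub b).const_mul r)
  refine (hasDerivAt_num.div hasDerivAt_den h).congr_deriv ?_
  ring

theorem hasDerivAt_arcsinePrimitive (hr : 0 < r) (hx : x ∈ Ioo a b) :
    HasDerivAt (arcsinePrimitive a b r) (arcsineKernel a b r x) x := by
  have hxa : 0 < x - a := sub_pos.2 hx.1
  have hbx : 0 < b - x := sub_pos.2 hx.2
  have den_pos : 0 < x - a + r * (b - x) := by positivity
  have moebius_pos : 0 < unitMoebius a b r x := div_pos hxa den_pos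
  have one_sub_moebius := one_sub_unitMoebius den_pos.ne'
  have moebius_lt_one : unitMoebius a b r x < 1 :=
    sub_pos.1 (one_sub_moebius ▸ by positivity)
  have sqrt_moebius_mul : √(unitMoebius a b r x * (1 - unitMoebius a b r x)) =
      √r * √((x - a) * (b - x)) / (x - a + r * (b - x)) := by
    rw [one_sub_moebius, unitMoebius, div_mul_div_comm, mul_left_comm,
      sqrt_div (by positivity), sqrt_mul_self den_pos.le, sqrt_mul hr.le]
  refine (((hasDerivAt_arcsin_sqrt moebius_pos moebius_lt_one).comp x
    (hasDerivAt_unitMoebius den_pos.ne')).const_mul (2 * √r)).congr_deriv ?_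
  rw [sqrt_moebius_mul, arcsineKernel]
  field_simp

theorem continuousOn_arcsinePrimitive (hr : 0 < r) (hab : a < b) :
    ContinuousOn (arcsinePrimitive a b r) (Icc a b) := by
  have continuousOn_moebius : ContinuousOn (unitMoebius a b r) (Icc a b) := fun z hz =>
    (hasDerivAt_unitMoebius
      (sub_add_mul_sub_pos hr hab hz).ne').continuousAt.continuousWithinAt
  exact (continuous_arcsin.comp_continuousOn continuousOn_moebius.sqrt).const_mul (2 * √r)

theorem arcsineKernel_nonneg (hr : 0 ≤ r) (hx : x ∈ Ioo a b) : 0 ≤ arcsineKernel a b r x := by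
  have hxa : 0 < x - a := sub_pos.2 hx.1
  have hbx : 0 < b - x := sub_pos.2 hx.2
  have hba : 0 < b - a := sub_pos.2 (hx.1.trans hx.2)
  unfold arcsineKernel
  positivity

theorem arcsineKernel_zero (a b : ℝ) : arcsineKernel a b 0 = 0 := by
  ext x
  simp [arcsineKernel]

theorem intervalIntegrable_arcsineKernel (hr : 0 ≤ r) (hab : a < b) :
    IntervalIntegrable (arcsineKernel a b r) volume a b := by
  rcases hr.eq_or_lt with rfl | hr
  · rw [arcsineKernel_zero]
    exact intervalIntegrable_const
  · exact (intervalIntegrable_iff_integrableOn_Ioc_of_le hab.le).2 <|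
      intervalIntegral.integrableOn_deriv_of_nonneg
        (continuousOn_arcsinePrimitive hr hab)
        (fun _ => hasDerivAt_arcsinePrimitive hr)
        (fun _ => arcsineKernel_nonneg hr.le)

theorem integral_arcsineKernel (hr : 0 ≤ r) (hab : a < b) :
    ∫ x in a..b, arcsineKernel a b r x = π * √r := by
  rcases hr.eq_or_lt with rfl | hr
  · simp [arcsineKernel_zero]
  · rw [intervalIntegral.integral_eq_sub_of_hasDerivAt_of_le hab.le
      (continuousOn_arcsinePrimitive hr hab)
      (fun _ => hasDerivAt_arcsinePrimitive hr)
      (intervalIntegrable_arcsineKernel hr.le hab),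
      arcsinePrimitive_left, arcsinePrimitive_right hab.ne, sub_zero]

theorem arcsineKernel_one (hab : a ≠ b) (x : ℝ) :
    arcsineKernel a b 1 x = 1 / √((x - a) * (b - x)) := by
  have den_eq : x - a + 1 * (b - x) = b - a := by ring
  rw [arcsineKernel, den_eq, one_mul, div_self (sub_ne_zero.2 hab.symm)]

theorem arcsineKernel_sub_div_sub {t : ℝ} (hab : a ≠ b) (htb : t ≠ b) (x : ℝ) :
    arcsineKernel a b ((t - a) / (t - b)) x = (t - a) / (t - x) / √((x - a) * (b - x)) := by
  have hba : b - a ≠ 0 := sub_ne_zero.2 hab.symm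
  have htb : t - b ≠ 0 := sub_ne_zero.2 htb
  have den_eq : x - a + (t - a) / (t - b) * (b - x) = (t - x) * (b - a) / (t - b) := by
    field_simp
    ring
  rw [arcsineKernel, den_eq, div_mul_eq_mul_div, div_div_div_cancel_right₀ htb,
    mul_div_mul_right _ _ hba]

theorem one_div_sub_mul_sqrt_eq_arcsineKernel_sub {t : ℝ} (hx : x ∈ Ioo a b) (htx : t ≠ x)
    (htb : t ≠ b) :
    1 / (t - x) * √((x - a) / (b - x)) =
      arcsineKernel a b ((t - a) / (t - b)) x - arcsineKernel a b 1 x := by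
  have hab : a ≠ b := (hx.1.trans hx.2).ne
  rw [arcsineKernel_sub_div_sub hab htb, arcsineKernel_one hab,
    sqrt_div_eq_div_sqrt_mul (sub_nonneg.2 hx.1.le), ← sub_div, div_sub_one (sub_ne_zero.2 htx)]
  ring

end Kernel

theorem equilibrium_integral_eval_general {a b t : ℝ} (hab : a < b) (ht : t ∉ Ioc a b) :
    (1 / π) * ∫ x in Ioo a b, (1 / (t - x)) * √((x - a) / (b - x)) =
      -1 + √((t - a) / (t - b)) := by
  have ratio_nonneg : 0 ≤ (t - a) / (t - b) := by
    rcases le_or_gt t a with hta | hat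
    · exact div_nonneg_of_nonpos (by linarith) (by linarith)
    · have hbt : b < t := not_le.1 fun htb => ht ⟨hat, htb⟩
      exact div_nonneg (by linarith) (by linarith)
  have ne_right : t ≠ b := by
    rintro rfl
    exact ht ⟨hab, le_rfl⟩
  have integrand_eq : EqOn (fun x => 1 / (t - x) * √((x - a) / (b - x)))
      (fun x => arcsineKernel a b ((t - a) / (t - b)) x - arcsineKernel a b 1 x) (Ioo a b) :=
    fun x hx => one_div_sub_mul_sqrt_eq_arcsineKernel_sub hx
      (fun htx => ht (htx ▸ Ioo_subset_Ioc_self hx)) ne_right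
  rw [setIntegral_congr_fun measurableSet_Ioo integrand_eq, ← integral_Ioc_eq_integral_Ioo,
    ← intervalIntegral.integral_of_le hab.le,
    intervalIntegral.integral_sub (intervalIntegrable_arcsineKernel ratio_nonneg hab)
      (intervalIntegrable_arcsineKernel zero_le_one hab),
    integral_arcsineKernel ratio_nonneg hab, integral_arcsineKernel zero_le_one hab, sqrt_one]
  field_simp
  ring

/-- **An explicit equilibrium-type integral.**
For `a < b < t`, `(1/π) ∫_a^b (1/(t − x)) √((x − a)/(b − x)) dx = −1 + √((t − a)/(t − b))`. -/
theorem equilibrium_integral_eval (a b t : ℝ) (hab : a < b) (hbt : b < t) :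
    (1 / Real.pi) * ∫ x in Set.Ioo a b, (1 / (t - x)) * Real.sqrt ((x - a) / (b - x)) =
      -1 + Real.sqrt ((t - a) / (t - b)) :=
  equilibrium_integral_eval_general hab fun ht => hbt.not_ge ht.2
end
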